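/- Let (a_j)_{j≥0} be a sequence of nonnegative real numbers and let c ≥ 0. Then Σ_{n=0}^∞ n! · [ Σ_{j=0}^n c^{n-j} a_j / (n-j)! ]² ≤ exp(c² + 1) · Σ_{j=0}^∞ j! a_j² (c² + 1)^j, as an inequality in [0, +∞]. -/

import Mathlib

open MeasureTheory Real Set

/-!
Fix `s > 0`. By the binomial theorem in divided-power form,
`(s + c ^ 2) ^ n / n! = ∑ i + j = n, (s ^ i / i!) * ((c ^ 2) ^ j / j!)`, and Cauchy–Schwarz with
these summands as weights bounds the square of `∑ i + j = n, c ^ j * a i / j!`. After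
multiplication by `n!` the bound is the `n`-th term of the Cauchy product of
`∑ j! * a j ^ 2 * ((c ^ 2 + s) / s) ^ j` with the exponential series at `c ^ 2 + s`.
-/

open Finset.HasAntidiagonal (antidiagonal mem_antidiagonal)
open scoped Nat

section Field

variable {K : Type*} [Field K]

theorem add_pow_div_factorial [CharZero K] (x y : K) (n : ℕ) :
    (x + y) ^ n / n ! = ∑ p ∈ antidiagonal n, x ^ p.1 / p.1 ! * (y ^ p.2 / p.2 !) := by
  rw [(Commute.all x y).add_pow', Finset.sum_div]
  refine Finset.sum_congr rfl fun p hp => ?_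
  obtain rfl := mem_antidiagonal.mp hp
  have hfact : ((p.1 + p.2)! : K) ≠ 0 := mod_cast Nat.factorial_ne_zero _
  rw [nsmul_eq_mul, Nat.cast_add_choose]
  field_simp

variable [LinearOrder K] [IsStrictOrderedRing K]

theorem sq_sum_antidiagonal_pow_mul_div_factorial_le (a : ℕ → K) (c : K) {s : K} (hs : 0 < s)
    (n : ℕ) :
    (∑ p ∈ antidiagonal n, c ^ p.2 * a p.1 / p.2 !) ^ 2 ≤
      (c ^ 2 + s) ^ n / n ! *
        ∑ p ∈ antidiagonal n, p.1 ! * a p.1 ^ 2 / s ^ p.1 / p.2 ! := by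
  rw [add_comm (c ^ 2), add_pow_div_factorial]
  refine Finset.sum_sq_le_sum_mul_sum_of_sq_le_mul _ (fun p _ => by positivity)
    (fun p _ => by positivity) fun p _ => le_of_eq ?_
  rw [pow_right_comm c 2]
  field_simp

theorem factorial_mul_sq_sum_antidiagonal_pow_mul_div_factorial_le (a : ℕ → K) (c : K) {s : K}
    (hs : 0 < s) (n : ℕ) :
    n ! * (∑ p ∈ antidiagonal n, c ^ p.2 * a p.1 / p.2 !) ^ 2 ≤
      ∑ p ∈ antidiagonal n,
        p.1 ! * a p.1 ^ 2 * ((c ^ 2 + s) / s) ^ p.1 * ((c ^ 2 + s) ^ p.2 / p.2 !) := by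
  have hfact : (n ! : K) ≠ 0 := mod_cast n.factorial_ne_zero
  calc
    _ ≤ n ! * ((c ^ 2 + s) ^ n / n ! *
          ∑ p ∈ antidiagonal n, p.1 ! * a p.1 ^ 2 / s ^ p.1 / p.2 !) := by
      gcongr
      exact sq_sum_antidiagonal_pow_mul_div_factorial_le a c hs n
    _ = ∑ p ∈ antidiagonal n,
          (c ^ 2 + s) ^ n * (p.1 ! * a p.1 ^ 2 / s ^ p.1 / p.2 !) := by
      rw [← mul_assoc, mul_div_cancel₀ _ hfact, Finset.mul_sum]
    _ = _ := by
      refine Finset.sum_congr rfl fun p hp => ?_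
      rw [← mem_antidiagonal.mp hp, pow_add, div_pow]
      ring

end Field

section ENNReal

open scoped ENNReal

theorem ennreal_tsum_mul_tsum_eq_tsum_sum_antidiagonal {A : Type*} [AddMonoid A]
    [Finset.HasAntidiagonal A] (f g : A → ℝ≥0∞) :
    (∑' i, f i) * ∑' j, g j = ∑' n, ∑ p ∈ antidiagonal n, f p.1 * g p.2 := by
  calc
    _ = ∑' p : A × A, f p.1 * g p.2 := by
      rw [ENNReal.tsum_prod (f := fun i j => f i * g j)]
      simp only [ENNReal.tsum_mul_left, ENNReal.tsum_mul_right]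
    _ = _ := by
      rw [← Finset.HasAntidiagonal.sigmaAntidiagonalEquivProd.tsum_eq, ENNReal.tsum_sigma']
      exact tsum_congr fun n => Finset.tsum_subtype _ fun p : A × A => f p.1 * g p.2

theorem tsum_ofReal_pow_div_factorial {x : ℝ} (hx : 0 ≤ x) :
    ∑' n : ℕ, ENNReal.ofReal (x ^ n / n !) = ENNReal.ofReal (exp x) := by
  rw [← ENNReal.ofReal_tsum_of_nonneg (fun n => by positivity) (summable_pow_div_factorial x),
    exp_eq_exp_ℝ, NormedSpace.exp_eq_tsum_div]

end ENNReal

theorem series_bound_exp''_general (a : ℕ → ℝ) (c : ℝ) {s : ℝ} (hs : 0 < s) :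
    ∑' n : ℕ, ENNReal.ofReal (n ! *
        (∑ j ∈ Finset.range (n + 1), c ^ (n - j) * a j / (n - j)!) ^ 2) ≤
      ENNReal.ofReal (exp (c ^ 2 + s)) *
        ∑' j : ℕ, ENNReal.ofReal (j ! * a j ^ 2 * ((c ^ 2 + s) / s) ^ j) := by
  rw [← tsum_ofReal_pow_div_factorial (by positivity), mul_comm,
    ennreal_tsum_mul_tsum_eq_tsum_sum_antidiagonal]
  refine ENNReal.tsum_le_tsum fun n => ?_
  have hterm := ENNReal.ofReal_le_ofReal
    (factorial_mul_sq_sum_antidiagonal_pow_mul_div_factorial_le a c hs n)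
  rw [ENNReal.ofReal_sum_of_nonneg (fun p _ => by positivity),
    Finset.Nat.sum_antidiagonal_eq_sum_range_succ fun i j => c ^ j * a i / j !] at hterm
  exact hterm.trans_eq (Finset.sum_congr rfl fun p _ => ENNReal.ofReal_mul (by positivity))

/-- The estimate showing `Σ_n n!‖f_n^t‖² < ∞` (abstract form): for nonnegative `a_j` and
`c ≥ 0`, `Σ_n n! [Σ_{j=0}^n c^{n-j} a_j/(n-j)!]² ≤ exp(c²+1) Σ_j j! a_j² (c²+1)^j`
in `[0,∞]`. -/
theorem series_bound_exp'' (a : ℕ → ℝ) (ha : ∀ j, 0 ≤ a j) (c : ℝ) (hc : 0 ≤ c) :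
    ∑' n : ℕ, ENNReal.ofReal ((n.factorial : ℝ) *
        (∑ j ∈ Finset.range (n + 1), c ^ (n - j) * a j / ((n - j).factorial : ℝ)) ^ 2) ≤
      ENNReal.ofReal (Real.exp (c ^ 2 + 1)) *
        ∑' j : ℕ, ENNReal.ofReal ((j.factorial : ℝ) * a j ^ 2 * (c ^ 2 + 1) ^ j) := by
  simpa only [div_one] using series_bound_exp''_general a c one_pos
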